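/- arXiv:1811.02717 — 3 statements merged into one kernel-verified Lean document; each statement's English description precedes it below -/
import Mathlib

section
/- (Leibniz type rule for the Chen derivative.) Let 0 < α < 1 and c < b. Suppose f, g : ℝ → ℝ are real-analytic with everywhere-convergent power series. Then for every x ∈ (c,b): (^{EN}D^{α}_{c}(f·g))(x) = Σ_{m=0}^∞ binom(α, m) f⁽ᵐ⁾(x) (^{EN}D^{α−m}_{c} g)(x), where f⁽ᵐ⁾ is the ordinary m-th derivative of f and the series converges. -/
open Real

/-- Generalized binomial coefficient `binom(γ, n) = γ(γ-1)⋯(γ-n+1)/n!`. -/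
noncomputable def genBinom (γ : ℝ) (n : ℕ) : ℝ :=
  (∏ i ∈ Finset.range n, (γ - (i : ℝ))) / (n.factorial : ℝ)

/-- Ψ-Riemann–Liouville fractional integral of order `α` with base point `a`;
by convention the order-0 integral is the identity. -/
noncomputable def psiI (a : ℝ) (Ψ f : ℝ → ℝ) (α : ℝ) (x : ℝ) : ℝ :=
  if α = 0 then f x
  else (Real.Gamma α)⁻¹ * ∫ t in a..x, deriv Ψ t * (Ψ x - Ψ t) ^ (α - 1) * f t

/-- Ψ-Riemann–Liouville fractional derivative of order `γ` (for `γ ≤ 0` it is the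
fractional integral of order `-γ`, the order-0 case being the identity). -/
noncomputable def psiRLD (a : ℝ) (Ψ f : ℝ → ℝ) (γ : ℝ) (x : ℝ) : ℝ :=
  if γ ≤ 0 then psiI a Ψ f (-γ) x
  else (deriv Ψ x)⁻¹ * deriv (fun y => psiI a Ψ f (1 - γ) y) x

/-- Ψ-Caputo fractional derivative of order `γ` (for `γ ≤ 0` it is the
fractional integral of order `-γ`). -/
noncomputable def psiCD (a : ℝ) (Ψ f : ℝ → ℝ) (γ : ℝ) (x : ℝ) : ℝ :=
  if γ ≤ 0 then psiI a Ψ f (-γ) x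
  else psiI a Ψ (fun t => (deriv Ψ t)⁻¹ * deriv f t) (1 - γ) x

/-- Ψ-Hilfer fractional derivative of order `α` and type `β`. -/
noncomputable def psiHD (a : ℝ) (Ψ f : ℝ → ℝ) (α β : ℝ) (x : ℝ) : ℝ :=
  psiI a Ψ
    (fun y => (deriv Ψ y)⁻¹ * deriv (fun z => psiI a Ψ f ((1 - β) * (1 - α)) z) y)
    (β * (1 - α)) x

/-- Classical Riemann–Liouville fractional integral with base point `a`. -/
noncomputable def rlI (a : ℝ) (α : ℝ) (f : ℝ → ℝ) (x : ℝ) : ℝ :=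
  if α = 0 then f x
  else (Real.Gamma α)⁻¹ * ∫ t in a..x, (x - t) ^ (α - 1) * f t

/-- Classical Riemann–Liouville fractional derivative (fractional integral for `γ ≤ 0`). -/
noncomputable def rlD (a : ℝ) (γ : ℝ) (f : ℝ → ℝ) (x : ℝ) : ℝ :=
  if γ ≤ 0 then rlI a (-γ) f x
  else deriv (fun y => rlI a (1 - γ) f y) x

/-- Classical Caputo fractional derivative (fractional integral for `γ ≤ 0`). -/
noncomputable def capD (a : ℝ) (γ : ℝ) (f : ℝ → ℝ) (x : ℝ) : ℝ :=
  if γ ≤ 0 then rlI a (-γ) f x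
  else rlI a (1 - γ) (deriv f) x

/-- Classical Hilfer fractional derivative of order `α` and type `β`. -/
noncomputable def hilD (a : ℝ) (α β : ℝ) (f : ℝ → ℝ) (x : ℝ) : ℝ :=
  rlI a (β * (1 - α))
    (fun y => deriv (fun z => rlI a ((1 - β) * (1 - α)) f z) y) x

/-- Hadamard fractional integral with base point `a`. -/
noncomputable def hadI (a : ℝ) (α : ℝ) (f : ℝ → ℝ) (x : ℝ) : ℝ :=
  if α = 0 then f x
  else (Real.Gamma α)⁻¹ * ∫ t in a..x, (Real.log x - Real.log t) ^ (α - 1) * f t / t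

/-- Caputo–Hadamard fractional derivative (Hadamard fractional integral for `γ ≤ 0`). -/
noncomputable def chD (a : ℝ) (γ : ℝ) (f : ℝ → ℝ) (x : ℝ) : ℝ :=
  if γ ≤ 0 then hadI a (-γ) f x
  else hadI a (1 - γ) (fun t => t * deriv f t) x

/-- `h` is real-analytic with a power series converging on all of `ℝ`. -/
def EntireReal (h : ℝ → ℝ) : Prop :=
  ∃ p : FormalMultilinearSeries ℝ ℝ ℝ, HasFPowerSeriesOnBall h p 0 ⊤

open MeasureTheory Set Filter Topology intervalIntegral

lemma lc_kint (c x α : ℝ) (hα1 : α < 1) {k : ℝ → ℝ} (hk : Continuous k) :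
    IntervalIntegrable (fun t => (x - t) ^ (-α) * k t) volume c x := by
  have h0 : IntervalIntegrable (fun u : ℝ => u ^ (-α)) volume (x - c) (x - x) :=
    intervalIntegrable_rpow' (by linarith)
  have h1 := h0.comp_sub_left x
  simp only [sub_sub_cancel] at h1
  exact h1.mul_continuousOn hk.continuousOn

lemma lc_scale (c y α : ℝ) (hy : c < y) (k : ℝ → ℝ) :
    ∫ t in c..y, (y - t) ^ (-α) * k t =
      (y - c) ^ (1 - α) * ∫ s in (0:ℝ)..1, (1 - s) ^ (-α) * k (c + (y - c) * s) := by
  have h := smul_integral_comp_add_mul (a := 0) (b := 1)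
    (fun t => (y - t) ^ (-α) * k t) (y - c) c
  simp only [mul_zero, add_zero, mul_one, add_sub_cancel] at h
  rw [← h, smul_eq_mul, ← intervalIntegral.integral_const_mul,
    ← intervalIntegral.integral_const_mul]
  apply integral_congr
  intro s hs
  rw [uIcc_of_le zero_le_one] at hs
  have hyc : 0 < y - c := by linarith
  have e : y - (c + (y - c) * s) = (y - c) * (1 - s) := by ring
  simp only
  rw [e, Real.mul_rpow hyc.le (by linarith [hs.2]), sub_eq_add_neg 1 α, Real.rpow_add hyc,
    Real.rpow_one]
  ring

lemma lc_deriv (c x α : ℝ) (hx : c < x) (hα1 : α < 1) {h : ℝ → ℝ}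
    (hh : ContDiff ℝ 1 h) :
    HasDerivAt (fun y => ∫ t in c..y, (y - t) ^ (-α) * h t)
      ((x - c)⁻¹ * ((1 - α) * (∫ t in c..x, (x - t) ^ (-α) * h t)
        + ∫ t in c..x, (x - t) ^ (-α) * ((t - c) * deriv h t))) x := by
  have hxc : 0 < x - c := by linarith
  have hd : Continuous (deriv h) := hh.continuous_deriv le_rfl
  have hdiff : Differentiable ℝ h := hh.differentiable one_ne_zero
  have hev : (fun y => ∫ t in c..y, (y - t) ^ (-α) * h t) =ᶠ[𝓝 x]
      fun y => (y - c) ^ (1 - α) * ∫ s in (0:ℝ)..1, (1 - s) ^ (-α) * h (c + (y - c) * s) := by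
    filter_upwards [lt_mem_nhds hx] with y hy
    exact lc_scale c y α hy h
  have hG : HasDerivAt (fun y => ∫ s in (0:ℝ)..1, (1 - s) ^ (-α) * h (c + (y - c) * s))
      (∫ s in (0:ℝ)..1, (1 - s) ^ (-α) * (s * deriv h (c + (x - c) * s))) x := by
    obtain ⟨M, hM⟩ := (isCompact_Icc (a := c - 1 * 1 - |x - c|) (b := c + 1 * 1 + |x - c|)).exists_bound_of_continuousOn
      hd.continuousOn
    refine (intervalIntegral.hasDerivAt_integral_of_dominated_loc_of_deriv_le
      (F := fun y s => (1 - s) ^ (-α) * h (c + (y - c) * s))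
      (F' := fun y s => (1 - s) ^ (-α) * (s * deriv h (c + (y - c) * s)))
      (bound := fun s => (1 - s) ^ (-α) * M) (Metric.ball_mem_nhds x one_pos) ?_ ?_ ?_ ?_ ?_ ?_).2
    · refine Eventually.of_forall fun y => ?_
      have := lc_kint 0 1 α hα1 (k := fun s => h (c + (y - c) * s))
        (hh.continuous.comp (by fun_prop))
      exact this.aestronglyMeasurable_restrict_uIoc
    · exact lc_kint 0 1 α hα1 (k := fun s => h (c + (x - c) * s))
        (hh.continuous.comp (by fun_prop))
    · have := lc_kint 0 1 α hα1 (k := fun s => s * deriv h (c + (x - c) * s))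
        (continuous_id.mul (hd.comp (by fun_prop)))
      exact this.aestronglyMeasurable_restrict_uIoc
    · refine Eventually.of_forall fun s hs y hy => ?_
      rw [uIoc_of_le zero_le_one] at hs
      have hp : 0 ≤ (1 - s) ^ (-α) := Real.rpow_nonneg (by linarith [hs.2]) _
      rw [norm_mul, Real.norm_of_nonneg hp]
      refine mul_le_mul_of_nonneg_left ?_ hp
      have hy' : |y - x| < 1 := by simpa [Real.dist_eq] using hy
      have habs : |(y - c) * s| ≤ 1 + |x - c| := by
        rw [abs_mul, abs_of_pos hs.1]
        have : |y - c| ≤ |y - x| + |x - c| := abs_sub_le _ _ _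
        nlinarith [abs_nonneg (y - c), hs.1, hs.2]
      have hb := hM (c + (y - c) * s) (by
        rw [abs_le] at habs
        constructor <;> linarith [habs.1, habs.2])
      rw [norm_mul, Real.norm_of_nonneg hs.1.le]
      nlinarith [norm_nonneg (deriv h (c + (y - c) * s)), hs.1, hs.2]
    · exact lc_kint 0 1 α hα1 (k := fun _ => M) continuous_const
    · refine Eventually.of_forall fun s hs y hy => ?_
      have h1 : HasDerivAt (fun y : ℝ => c + (y - c) * s) s y := by
        simpa using (((hasDerivAt_id y).sub_const c).mul_const s).const_add c
      have h2 := ((hdiff (c + (y - c) * s)).hasDerivAt.comp y h1).const_mul ((1 - s) ^ (-α))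
      refine h2.congr_deriv ?_
      ring
  have hP : HasDerivAt (fun y : ℝ => (y - c) ^ (1 - α)) ((1 - α) * (x - c) ^ (-α)) x := by
    have := ((hasDerivAt_id x).sub_const c).rpow_const (p := 1 - α) (Or.inl hxc.ne')
    refine this.congr_deriv ?_
    simp only [id_eq]
    rw [show 1 - α - 1 = -α by ring]; ring
  refine HasDerivAt.congr_of_eventuallyEq ?_ hev
  refine (hP.mul hG).congr_deriv ?_
  rw [lc_scale c x α hx h, lc_scale c x α hx (fun t => (t - c) * deriv h t)]
  have e : ∀ s, (1 - s) ^ (-α) * ((c + (x - c) * s - c) * deriv h (c + (x - c) * s))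
      = (x - c) * ((1 - s) ^ (-α) * (s * deriv h (c + (x - c) * s))) := by intro s; ring
  simp only [e]
  rw [intervalIntegral.integral_const_mul, sub_eq_add_neg 1 α, Real.rpow_add hxc, Real.rpow_one]
  field_simp

lemma lc_parts (c x α : ℝ) (hx : c < x) (hα1 : α < 1) {h q : ℝ → ℝ}
    (hh : ContDiff ℝ 1 h) (hq : Continuous q) (hhq : ∀ t, h t = (x - t) * q t) :
    (1 - α) * (∫ t in c..x, (x - t) ^ (-α) * h t)
        + (∫ t in c..x, (x - t) ^ (-α) * ((t - c) * deriv h t))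
      = -α * (x - c) * ∫ t in c..x, (x - t) ^ (-α) * q t := by
  have hd : Continuous (deriv h) := hh.continuous_deriv le_rfl
  have hdiff : Differentiable ℝ h := hh.differentiable one_ne_zero
  have hc := hh.continuous
  have I1 := lc_kint c x α hα1 hc
  have I2 := lc_kint c x α hα1 (k := fun t => (t - c) * deriv h t) (by fun_prop)
  have I3 := lc_kint c x α hα1 hq
  have key : ∫ t in c..x, ((1 - α) * ((x - t) ^ (-α) * h t)
      + (x - t) ^ (-α) * ((t - c) * deriv h t)
      + α * (x - c) * ((x - t) ^ (-α) * q t))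
      = (x - x) ^ (1 - α) * ((x - c) * q x) - (x - c) ^ (1 - α) * ((c - c) * q c) := by
    refine integral_eq_sub_of_hasDerivAt_of_le hx.le
      (f := fun t => (x - t) ^ (1 - α) * ((t - c) * q t)) ?_ ?_ ?_
    · refine Continuous.continuousOn ?_
      have : Continuous fun t : ℝ => (x - t) ^ (1 - α) :=
        (continuous_const.sub continuous_id).rpow_const (fun t => Or.inr (by linarith))
      fun_prop
    · intro t ht
      have hxt : 0 < x - t := by linarith [ht.2]
      have e1 : (fun t => (x - t) ^ (1 - α) * ((t - c) * q t)) =ᶠ[𝓝 t]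
          fun t => (x - t) ^ (-α) * ((t - c) * h t) := by
        filter_upwards [gt_mem_nhds ht.2] with s hs
        have : 0 < x - s := by linarith
        rw [hhq, sub_eq_add_neg 1 α, Real.rpow_add this, Real.rpow_one]; ring
      refine HasDerivAt.congr_of_eventuallyEq ?_ e1
      have d1 : HasDerivAt (fun t : ℝ => (x - t) ^ (-α)) (α * (x - t) ^ (-α - 1)) t := by
        have := ((hasDerivAt_id t).const_sub x).rpow_const (p := -α) (Or.inl hxt.ne')
        refine this.congr_deriv ?_
        simp only [id_eq]
        ring
      have d2 := d1.mul (((hasDerivAt_id t).sub_const c).mul (hdiff t).hasDerivAt)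
      refine d2.congr_deriv ?_
      have e2 : (x - t) ^ (-α) = (x - t) ^ (-α - 1) * (x - t) := by
        rw [← Real.rpow_add_one hxt.ne']; congr 1; ring
      simp only [id_eq, Pi.mul_apply]
      rw [e2, hhq]
      ring
    · exact ((I1.const_mul _).add I2).add (I3.const_mul _)
  rw [intervalIntegral.integral_add ((I1.const_mul _).add I2) (I3.const_mul _),
    intervalIntegral.integral_add (I1.const_mul _) I2, intervalIntegral.integral_const_mul,
    intervalIntegral.integral_const_mul, sub_self, Real.zero_rpow (by linarith)] at key
  linarith

lemma lc_taylor {f : ℝ → ℝ} (hf : EntireReal f) (x t : ℝ) :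
    HasSum (fun n : ℕ => iteratedDeriv n f x / n.factorial * (t - x) ^ n) (f t) := by
  obtain ⟨p, hp⟩ := hf
  have h1 := hp.changeOrigin (y := x) (by simp)
  rw [zero_add, ENNReal.top_sub_coe] at h1
  have h2 := h1.analyticAt.hasFPowerSeriesAt
  have h3 := h2.eq_formalMultilinearSeries h1.hasFPowerSeriesAt
  rw [← h3] at h1
  have h4 := h1.hasSum (y := t - x) (by simp)
  simpa [FormalMultilinearSeries.ofScalars, mul_comm] using h4

lemma lc_contDiff {f : ℝ → ℝ} (hf : EntireReal f) : ContDiff ℝ 1 f := by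
  obtain ⟨p, hp⟩ := hf
  have h := hp.analyticOnNhd.contDiffOn (n := 1) (by simp)
  simpa [contDiffOn_univ] using h

lemma lc_series (c x α : ℝ) (hx : c < x) (hα0 : 0 < α) (hα1 : α < 1) {f g q : ℝ → ℝ}
    (hf : EntireReal f) (hg : Continuous g)
    (hq : ∀ t, (f t - f x) * g t = (x - t) * q t) :
    HasSum (fun m : ℕ => iteratedDeriv (m + 1) f x / (m + 1).factorial * (-1) ^ (m + 1) *
        ∫ t in c..x, (x - t) ^ ((m : ℝ) - α) * g t)
      (∫ t in c..x, (x - t) ^ (-α) * q t) := by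
  set a : ℕ → ℝ := fun n => iteratedDeriv n f x / n.factorial with ha
  have hR : 0 < x - c := by linarith
  obtain ⟨M, hM⟩ := (isCompact_Icc (a := c) (b := x)).exists_bound_of_continuousOn hg.continuousOn
  have hS : Summable fun m : ℕ => |a (m + 1)| * (x - c) ^ m := by
    have h1 := (lc_taylor hf x (x + (x - c))).summable.abs
    have h2 := ((summable_nat_add_iff 1).2 h1).mul_right (x - c)⁻¹
    refine h2.congr fun m => ?_
    simp only [add_sub_cancel_left]
    rw [abs_mul, abs_of_pos (pow_pos hR _), pow_succ]
    field_simp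
    rfl
  simp only [← intervalIntegral.integral_const_mul]
  refine intervalIntegral.hasSum_integral_of_dominated_convergence
    (fun m t => (|a (m + 1)| * (x - c) ^ m) * ((x - t) ^ (-α) * M)) ?_ ?_ ?_ ?_ ?_
  · intro m
    have := (lc_kint c x (α - m) (by linarith [(Nat.cast_nonneg m : (0:ℝ) ≤ m)]) hg).const_mul
      (a (m + 1) * (-1) ^ (m + 1))
    simp only [neg_sub] at this
    exact this.aestronglyMeasurable_restrict_uIoc
  · intro m
    have hne : ∀ᵐ t : ℝ, t ≠ x := by simp [ae_iff, measure_singleton]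
    filter_upwards [hne] with t htx ht
    rw [uIoc_of_le hx.le] at ht
    have hxt : 0 < x - t := sub_pos.2 (lt_of_le_of_ne ht.2 htx)
    have hp : 0 ≤ (x - t) ^ (-α) := Real.rpow_nonneg hxt.le _
    have e : (x - t) ^ ((m : ℝ) - α) = (x - t) ^ m * (x - t) ^ (-α) := by
      rw [sub_eq_add_neg (m : ℝ) α, Real.rpow_add hxt, Real.rpow_natCast]
    rw [e, norm_mul, norm_mul, norm_mul, norm_mul, norm_pow, norm_neg, norm_one, one_pow, mul_one,
      Real.norm_of_nonneg hp, norm_pow, Real.norm_of_nonneg hxt.le, ← Real.norm_eq_abs]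
    have hM' := hM t ⟨ht.1.le, ht.2⟩
    calc _ = ‖a (m + 1)‖ * (x - t) ^ m * ((x - t) ^ (-α) * ‖g t‖) := by
          simp only [ha]; ring
      _ ≤ _ := by
          have : (x - t) ^ m ≤ (x - c) ^ m := pow_le_pow_left₀ hxt.le (by linarith [ht.1]) _
          gcongr
  · exact Eventually.of_forall fun t _ => hS.mul_right _
  · simp only [tsum_mul_right]
    exact (lc_kint c x α hα1 (k := fun _ => M) continuous_const).const_mul _
  · have hne : ∀ᵐ t : ℝ, t ≠ x := by simp [ae_iff, measure_singleton]
    filter_upwards [hne] with t htx ht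
    rw [uIoc_of_le hx.le] at ht
    have hxt : 0 < x - t := sub_pos.2 (lt_of_le_of_ne ht.2 htx)
    have h1 := (hasSum_nat_add_iff' 1).2 (lc_taylor hf x t)
    have h2 := h1.mul_left ((x - t) ^ (-α) * g t * (x - t)⁻¹)
    convert! h2 using 1
    · funext m
      have e : (x - t) ^ ((m : ℝ) - α) = (x - t) ^ m * (x - t) ^ (-α) := by
        rw [sub_eq_add_neg (m : ℝ) α, Real.rpow_add hxt, Real.rpow_natCast]
      have e2 : (t - x) ^ (m + 1) = (-1) ^ (m + 1) * ((x - t) ^ m * (x - t)) := by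
        rw [← pow_succ, ← mul_pow]; ring
      rw [e, e2]
      field_simp
    · have := hq t
      simp only [Finset.range_one, Finset.sum_singleton, iteratedDeriv_zero, Nat.factorial_zero,
        Nat.cast_one, div_one, pow_zero, mul_one]
      have e : q t = (x - t)⁻¹ * ((f t - f x) * g t) := by rw [this]; field_simp
      rw [e]; ring

lemma lc_binom (α : ℝ) (hα1 : α < 1) (m : ℕ) :
    (∏ i ∈ Finset.range (m + 1), (α - (i : ℝ))) * Real.Gamma (1 - α)
      = α * (-1) ^ m * Real.Gamma (m + 1 - α) := by
  induction m with
  | zero => simp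
  | succ m ih =>
    rw [Finset.prod_range_succ]
    have h : ((m + 1 : ℕ) : ℝ) + 1 - α = ((m : ℝ) + 1 - α) + 1 := by push_cast; ring
    have hm : (0:ℝ) ≤ m := Nat.cast_nonneg m
    rw [h, Real.Gamma_add_one (by linarith), mul_right_comm, ih]
    push_cast
    ring

/-- Leibniz type rule for the Chen fractional derivative with base
point `c` (the Riemann–Liouville derivative with base point `c`). -/
theorem leibniz_Chen
    (c b : ℝ) (hcb : c < b) (α : ℝ) (hα0 : 0 < α) (hα1 : α < 1)
    (f g : ℝ → ℝ) (hf : EntireReal f) (hg : EntireReal g)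
    (x : ℝ) (hx : x ∈ Set.Ioo c b) :
    HasSum
      (fun m : ℕ => genBinom α m * iteratedDeriv m f x * rlD c (α - m) g x)
      (rlD c α (fun t => f t * g t) x) := by
  have hcx : c < x := hx.1
  have hxc : 0 < x - c := by linarith
  have cf := lc_contDiff hf
  have cg := lc_contDiff hg
  have hrl : ∀ (k : ℝ → ℝ) (D : ℝ),
      HasDerivAt (fun y => ∫ t in c..y, (y - t) ^ (-α) * k t) D x →
      rlD c α k x = (Real.Gamma (1 - α))⁻¹ * D := by
    intro k D hD
    unfold rlD rlI
    rw [if_neg (not_le.2 hα0)]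
    have e : (1 - α) ≠ 0 := by linarith
    simp only [if_neg e, show 1 - α - 1 = -α by ring]
    exact (hD.const_mul _).deriv
  set h : ℝ → ℝ := fun t => (f t - f x) * g t with hh
  have ch : ContDiff ℝ 1 h := (cf.sub contDiff_const).mul cg
  set q : ℝ → ℝ := fun t => - dslope h x t with hqdef
  have hx0 : h x = 0 := by simp [hh]
  have hhq : ∀ t, h t = (x - t) * q t := by
    intro t
    have := sub_smul_dslope h x t
    rw [smul_eq_mul, hx0] at this
    simp only [hqdef]
    linarith
  have hqc : Continuous q := by
    refine Continuous.neg ?_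
    rw [continuous_iff_continuousAt]
    intro t
    by_cases ht : t = x
    · rw [ht, continuousAt_dslope_same]
      exact ch.differentiable one_ne_zero x
    · exact (continuousAt_dslope_of_ne ht).2 ch.continuous.continuousAt
  have Dg := lc_deriv c x α hcx hα1 cg
  have Dh := lc_deriv c x α hcx hα1 ch
  rw [lc_parts c x α hcx hα1 ch hqc hhq] at Dh
  have Dfg : HasDerivAt (fun y => ∫ t in c..y, (y - t) ^ (-α) * (f t * g t))
      (f x * ((x - c)⁻¹ * ((1 - α) * (∫ t in c..x, (x - t) ^ (-α) * g t)
        + ∫ t in c..x, (x - t) ^ (-α) * ((t - c) * deriv g t))) +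
      (x - c)⁻¹ * (-α * (x - c) * ∫ t in c..x, (x - t) ^ (-α) * q t)) x := by
    refine ((Dg.const_mul (f x)).add Dh).congr_of_eventuallyEq ?_
    refine Eventually.of_forall fun y => ?_
    simp only [Pi.add_apply]
    rw [← intervalIntegral.integral_const_mul, ← intervalIntegral.integral_add
      ((lc_kint c y α hα1 cg.continuous).const_mul _) (lc_kint c y α hα1 ch.continuous)]
    refine integral_congr fun t _ => ?_
    simp only [hh]
    ring
  have hΓ : Real.Gamma (1 - α) ≠ 0 := (Real.Gamma_pos_of_pos (by linarith)).ne'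
  have hs := (lc_series c x α hcx hα0 hα1 hf cg.continuous hhq).mul_left
    (-α * (Real.Gamma (1 - α))⁻¹)
  refine (hasSum_nat_add_iff' 1).1 ?_
  convert! hs using 1
  · funext m
    have hm : (0:ℝ) ≤ m := Nat.cast_nonneg m
    have hpos : 0 < (m : ℝ) + 1 - α := by linarith
    have hb := lc_binom α hα1 m
    have hΓm : Real.Gamma (m + 1 - α) ≠ 0 := (Real.Gamma_pos_of_pos hpos).ne'
    unfold rlD rlI genBinom
    rw [if_pos (by push_cast; linarith)]
    have e1 : -(α - ((m + 1 : ℕ) : ℝ)) = m + 1 - α := by push_cast; ring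
    rw [e1, if_neg hpos.ne', show (m : ℝ) + 1 - α - 1 = m - α by ring]
    have hb' : (∏ i ∈ Finset.range (m + 1), (α - (i : ℝ)))
      = α * (-1) ^ m * Real.Gamma (m + 1 - α) * (Real.Gamma (1 - α))⁻¹ := by
      rw [← hb]; field_simp
    rw [hb', pow_succ]
    field_simp
  · rw [hrl _ _ Dfg]
    simp only [Finset.range_one, Finset.sum_singleton, iteratedDeriv_zero, Nat.cast_zero, sub_zero]
    rw [hrl _ _ Dg]
    simp only [genBinom, Finset.range_zero, Finset.prod_empty, Nat.factorial_zero, Nat.cast_one]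
    field_simp
    ring
end

section
/- (Leibniz rule for the Ψ-Caputo derivative in terms of Ψ-Riemann–Liouville derivatives.) Let 0 < α < 1, a < b, Ψ : ℝ → ℝ strictly increasing and continuously differentiable on [a,b] with Ψ'(t) > 0 for all t ∈ [a,b]. Suppose f = h ∘ Ψ and g = w ∘ Ψ with h, w real-analytic with everywhere-convergent power series, and write f⁽ᵏ⁾(x) := h⁽ᵏ⁾(Ψ(x)). Then for every x ∈ (a,b): (^{C}D^{α;Ψ}(f·g))(x) = Σ_{k=0}^∞ binom(α, k) f⁽ᵏ⁾(x) (^{RL}D^{α−k;Ψ} g)(x) − f(a) g(a) (Ψ(x) − Ψ(a))^{−α} / Γ(1−α), the series converging. -/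
open Real

open MeasureTheory Set

lemma hasSum_of_eq' {f g : ℕ → ℝ} {a b : ℝ} (h : HasSum f a) (hf : ∀ k, g k = f k)
    (hab : b = a) : HasSum g b := by
  have : g = f := funext hf
  rw [this, hab]
  exact h

lemma entire_taylor {h : ℝ → ℝ} (hh : EntireReal h) (X y : ℝ) :
    HasSum (fun k : ℕ => iteratedDeriv k h X / (k.factorial : ℝ) * y ^ k) (h (X + y)) := by
  obtain ⟨p, hp⟩ := hh
  have h1 := hp.changeOrigin (y := X) (by simp)
  have h2 := h1.hasSum_iteratedFDeriv (y := y) (by simp)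
  rw [zero_add] at h2
  refine hasSum_of_eq' h2 (fun k => ?_) rfl
  have h3 := (iteratedFDeriv ℝ k h X).map_smul_univ (fun _ => y) (fun _ => (1 : ℝ))
  simp only [smul_eq_mul, mul_one, Finset.prod_const, Finset.card_univ, Fintype.card_fin] at h3
  rw [h3, iteratedDeriv_eq_iteratedFDeriv]
  simp only [smul_eq_mul]
  ring

lemma entire_contDiff {h : ℝ → ℝ} (hh : EntireReal h) : ContDiff ℝ 1 h := by
  obtain ⟨p, hp⟩ := hh
  apply AnalyticOnNhd.contDiff
  have := hp.analyticOnNhd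
  simpa using this

lemma genBinom_gamma (α : ℝ) (hα1 : α < 1) (n : ℕ) :
    genBinom α (n + 1) * (Real.Gamma (((n + 1 : ℕ) : ℝ) - α))⁻¹
      = α * (Real.Gamma (1 - α))⁻¹ * ((-1) ^ n / ((n + 1).factorial : ℝ)) := by
  have hfac : (((n + 1).factorial : ℕ) : ℝ) ≠ 0 := by positivity
  have key : ∀ n : ℕ, (∏ i ∈ Finset.range (n + 1), (α - (i : ℝ))) * Real.Gamma (1 - α)
      = α * (-1) ^ n * Real.Gamma (((n + 1 : ℕ) : ℝ) - α) := by
    intro n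
    induction n with
    | zero => simp
    | succ m ih =>
      rw [Finset.prod_range_succ, mul_right_comm, ih]
      have hm : (((m + 1 : ℕ) : ℝ) - α) ≠ 0 := by
        push_cast
        have : (0 : ℝ) ≤ m := Nat.cast_nonneg m
        intro h0
        linarith
      have := Real.Gamma_add_one hm
      have e : ((m + 1 + 1 : ℕ) : ℝ) - α = (((m + 1 : ℕ) : ℝ) - α) + 1 := by push_cast; ring
      rw [e, this]
      push_cast
      ring
  have hG1 : Real.Gamma (1 - α) ≠ 0 := (Real.Gamma_pos_of_pos (by linarith)).ne'
  have hG2 : Real.Gamma (((n + 1 : ℕ) : ℝ) - α) ≠ 0 := by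
    refine (Real.Gamma_pos_of_pos ?_).ne'
    push_cast
    have : (0 : ℝ) ≤ n := Nat.cast_nonneg n
    linarith
  have := key n
  unfold genBinom
  rw [div_mul_eq_mul_div, mul_div_assoc', div_left_inj' hfac, ← div_eq_mul_inv, div_eq_iff hG2]
  field_simp
  linarith

lemma psi_cov {a y : ℝ} (hay : a ≤ y) {Ψ : ℝ → ℝ} (hmono : StrictMonoOn Ψ (Icc a y))
    (hpos : ∀ t ∈ Icc a y, 0 < deriv Ψ t) (G : ℝ → ℝ) :
    ∫ t in a..y, deriv Ψ t * G (Ψ t) = ∫ s in Ψ a..Ψ y, G s := by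
  have hd : ∀ t ∈ Icc a y, DifferentiableAt ℝ Ψ t := fun t ht =>
    differentiableAt_of_deriv_ne_zero (hpos t ht).ne'
  have hc : ContinuousOn Ψ (Icc a y) := fun t ht => (hd t ht).continuousAt.continuousWithinAt
  have hle : Ψ a ≤ Ψ y := hmono.monotoneOn ⟨le_rfl, hay⟩ ⟨hay, le_rfl⟩ hay
  have him : Ψ '' Ioc a y = Ioc (Ψ a) (Ψ y) := by
    apply Subset.antisymm
    · rintro _ ⟨t, ht, rfl⟩
      exact ⟨hmono ⟨le_rfl, hay⟩ ⟨ht.1.le, ht.2⟩ ht.1,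
        hmono.monotoneOn ⟨ht.1.le, ht.2⟩ ⟨hay, le_rfl⟩ ht.2⟩
    · exact intermediate_value_Ioc hay hc
  rw [intervalIntegral.integral_of_le hay, intervalIntegral.integral_of_le hle, ← him,
    integral_image_eq_integral_abs_deriv_smul measurableSet_Ioc
      (fun t ht => (hd t ⟨ht.1.le, ht.2⟩).hasDerivAt.hasDerivWithinAt)
      (hmono.injOn.mono Ioc_subset_Icc_self)]
  refine setIntegral_congr_fun measurableSet_Ioc fun t ht => ?_
  simp only [smul_eq_mul, abs_of_pos (hpos t ⟨ht.1.le, ht.2⟩)]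

lemma kern_int {A X r : ℝ} (hr : -1 < r) :
    IntervalIntegrable (fun s => (X - s) ^ r) volume A X := by
  have h0 : IntervalIntegrable (fun u : ℝ => u ^ r) volume (X - A) 0 :=
    intervalIntegral.intervalIntegrable_rpow' hr
  simpa using h0.comp_sub_left X

lemma kern_int_mul {A X r : ℝ} (hr : -1 < r) {F : ℝ → ℝ} (hF : Continuous F) :
    IntervalIntegrable (fun s => (X - s) ^ r * F s) volume A X :=
  (kern_int hr).mul_continuousOn hF.continuousOn

lemma aesm_of {A B : ℝ} {F : ℝ → ℝ} (hF : IntervalIntegrable F volume A B) :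
    AEStronglyMeasurable F (volume.restrict (uIoc A B)) :=
  (intervalIntegrable_iff.mp hF).aestronglyMeasurable

lemma scale_int {A Y r : ℝ} (hY : A < Y) (F : ℝ → ℝ) :
    ∫ s in A..Y, (Y - s) ^ r * F s
      = (Y - A) ^ (1 + r) * ∫ τ in (0:ℝ)..1, (1 - τ) ^ r * F ((Y - A) * τ + A) := by
  have h := intervalIntegral.mul_integral_comp_mul_add (a := 0) (b := 1)
    (f := fun s => (Y - s) ^ r * F s) (Y - A) A
  have e1 : (Y - A) * 0 + A = A := by ring
  have e2 : (Y - A) * 1 + A = Y := by ring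
  rw [e1, e2] at h
  have hL : 0 < Y - A := by linarith
  rw [← h, rpow_add hL, rpow_one, mul_assoc]
  congr 1
  rw [← intervalIntegral.integral_const_mul]
  apply intervalIntegral.integral_congr
  intro τ hτ
  rw [uIcc_of_le zero_le_one] at hτ
  have e3 : Y - ((Y - A) * τ + A) = (Y - A) * (1 - τ) := by ring
  simp only [e3]
  rw [mul_rpow hL.le (by linarith [hτ.2])]
  ring

lemma ibp_one {A X α : ℝ} (hα1 : α < 1) (hAX : A < X) {w : ℝ → ℝ}
    (hw : ContDiff ℝ 1 w) :
    ∫ s in A..X, (X - s) ^ (1 - α) * deriv w s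
      = (1 - α) * (∫ s in A..X, (X - s) ^ (-α) * w s) - (X - A) ^ (1 - α) * w A := by
  have hw' : Continuous (deriv w) := hw.continuous_deriv le_rfl
  have i1 := kern_int_mul (A := A) (X := X) (r := 1 - α) (by linarith) hw'
  have i2 := (kern_int_mul (A := A) (X := X) (r := -α) (by linarith) hw.continuous).const_mul (1 - α)
  have h := intervalIntegral.integral_eq_sub_of_hasDerivAt_of_le hAX.le
    (f := fun s => (X - s) ^ (1 - α) * w s)
    (f' := fun s => (X - s) ^ (1 - α) * deriv w s - (1 - α) * ((X - s) ^ (-α) * w s))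
    ((ContinuousOn.rpow_const (by fun_prop) (fun _ _ => Or.inr (by linarith))).mul
      hw.continuous.continuousOn)
    (by
      intro s hs
      have hne : X - s ≠ 0 := by linarith [hs.2]
      have d1 : HasDerivAt (fun s => X - s) (-1) s := by
        simpa using (hasDerivAt_id s).const_sub X
      have d2 := (d1.rpow_const (p := 1 - α) (Or.inl hne)).mul
        (hw.differentiable one_ne_zero s).hasDerivAt
      have e : (1 - α - 1) = -α := by ring
      rw [e] at d2
      refine d2.congr_deriv ?_
      ring) (i1.sub i2)
  rw [intervalIntegral.integral_sub i1 i2, intervalIntegral.integral_const_mul] at h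
  simp only [sub_self] at h
  rw [zero_rpow (by linarith : (1 - α) ≠ 0)] at h
  linarith

lemma rl_deriv {A X α : ℝ} (hα1 : α < 1) (hAX : A < X) {w : ℝ → ℝ}
    (hw : ContDiff ℝ 1 w) :
    HasDerivAt (fun Y => ∫ s in A..Y, (Y - s) ^ (-α) * w s)
      ((X - A) ^ (-α) * w A + ∫ s in A..X, (X - s) ^ (-α) * deriv w s) X := by
  have hw' : Continuous (deriv w) := hw.continuous_deriv le_rfl
  have hL : 0 < X - A := by linarith
  have hr : -1 < -α := by linarith
  obtain ⟨M, hM⟩ : ∃ M, ∀ s ∈ Icc A (X + 1), ‖deriv w s‖ ≤ M :=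
    isCompact_Icc.exists_bound_of_continuousOn hw'.continuousOn
  have hK : HasDerivAt (fun Y => ∫ τ in (0:ℝ)..1, (1 - τ) ^ (-α) * w ((Y - A) * τ + A))
      (∫ τ in (0:ℝ)..1, (1 - τ) ^ (-α) * (deriv w ((X - A) * τ + A) * τ)) X := by
    refine (intervalIntegral.hasDerivAt_integral_of_dominated_loc_of_deriv_le
      (s := Ioo A (X + 1)) (bound := fun τ => (1 - τ) ^ (-α) * M)
      (F := fun Y τ => (1 - τ) ^ (-α) * w ((Y - A) * τ + A))
      (F' := fun Y τ => (1 - τ) ^ (-α) * (deriv w ((Y - A) * τ + A) * τ))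
      (Ioo_mem_nhds hAX (by linarith)) ?_ ?_ ?_ ?_ ?_ ?_).2
    · refine Filter.Eventually.of_forall fun Y => ?_
      exact aesm_of (kern_int_mul hr (F := fun τ => w ((Y - A) * τ + A))
        (hw.continuous.comp (by fun_prop)))
    · exact kern_int_mul hr (F := fun τ => w ((X - A) * τ + A))
        (hw.continuous.comp (by fun_prop))
    · exact aesm_of (kern_int_mul hr (F := fun τ => deriv w ((X - A) * τ + A) * τ)
        ((hw'.comp (by fun_prop)).mul continuous_id))
    · refine Filter.Eventually.of_forall fun τ hτ Y hY => ?_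
      rw [uIoc_of_le zero_le_one] at hτ
      have hk : 0 ≤ (1 - τ) ^ (-α) := rpow_nonneg (by linarith [hτ.2]) _
      have hYA : 0 < Y - A := by linarith [hY.1]
      have hb := hM ((Y - A) * τ + A) ⟨by nlinarith [hτ.1], by nlinarith [hτ.2, hτ.1, hY.2]⟩
      rw [norm_mul, norm_of_nonneg hk, norm_mul, norm_of_nonneg hτ.1.le]
      refine mul_le_mul_of_nonneg_left ?_ hk
      nlinarith [norm_nonneg (deriv w ((Y - A) * τ + A)), hτ.2, hτ.1]
    · exact kern_int_mul hr continuous_const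
    · refine Filter.Eventually.of_forall fun τ hτ Y hY => ?_
      have d1 : HasDerivAt (fun Y => (Y - A) * τ + A) τ Y := by
        simpa using (((hasDerivAt_id Y).sub_const A).mul_const τ).add_const A
      exact (HasDerivAt.comp Y (hw.differentiable one_ne_zero _).hasDerivAt d1).const_mul _
  have d1 : HasDerivAt (fun Y => (Y - A) ^ (1 + -α)) ((1 - α) * (X - A) ^ (-α)) X := by
    have := ((hasDerivAt_id X).sub_const A).rpow_const (p := 1 + -α) (Or.inl hL.ne')
    refine this.congr_deriv ?_
    have e : 1 + -α - 1 = -α := by ring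
    rw [e]
    simp only [id]
    ring
  have d2 := d1.mul hK
  have hev : (fun Y => ∫ s in A..Y, (Y - s) ^ (-α) * w s) =ᶠ[nhds X]
      ((fun Y => (Y - A) ^ (1 + -α)) *
        fun Y => ∫ τ in (0:ℝ)..1, (1 - τ) ^ (-α) * w ((Y - A) * τ + A)) := by
    filter_upwards [Ioi_mem_nhds hAX] with Y hY
    exact scale_int hY w
  refine (d2.congr_of_eventuallyEq hev).congr_deriv ?_
  have s1 := scale_int (r := -α) hAX w
  have s2 := scale_int (r := -α) hAX (fun s => deriv w s * ((s - A) / (X - A)))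
  have s3 : ∀ τ : ℝ, ((X - A) * τ + A - A) / (X - A) = τ := by
    intro τ; field_simp; ring
  simp only [s3] at s2
  rw [← s2]
  have i1 := kern_int_mul (A := A) (X := X) hr hw'
  have i2 := kern_int_mul (A := A) (X := X) hr (F := fun s => deriv w s * ((s - A) / (X - A)))
    (hw'.mul (by fun_prop))
  have h4 : (X - A) * (∫ s in A..X, (X - s) ^ (-α) * deriv w s)
      - (X - A) * (∫ s in A..X, (X - s) ^ (-α) * (deriv w s * ((s - A) / (X - A))))
      = ∫ s in A..X, (X - s) ^ (1 - α) * deriv w s := by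
    rw [← mul_sub, ← intervalIntegral.integral_sub i1 i2, ← intervalIntegral.integral_const_mul]
    refine intervalIntegral.integral_congr_uIoo fun s hs => ?_
    rw [uIoo_of_le hAX.le] at hs
    have hp : 0 < X - s := by linarith [hs.2]
    have : (X - s) ^ (1 - α) = (X - s) * (X - s) ^ (-α) := by
      rw [sub_eq_add_neg 1, rpow_add hp, rpow_one]
    simp only [this]
    field_simp
    ring
  rw [ibp_one hα1 hAX hw, s1] at h4
  have e5 : (X - A) ^ (1 + -α) = (X - A) * (X - A) ^ (-α) := by
    rw [rpow_add hL, rpow_one]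
  have e6 : (X - A) ^ (1 - α) = (X - A) * (X - A) ^ (-α) := by
    rw [← e5]; congr 1
  rw [e5, e6] at h4
  apply mul_left_cancel₀ hL.ne'
  rw [mul_add, mul_add]
  linarith

lemma dslope_cont {h : ℝ → ℝ} (hh : ContDiff ℝ 1 h) (X : ℝ) : Continuous (dslope h X) := by
  rw [← continuousOn_univ, continuousOn_dslope Filter.univ_mem]
  exact ⟨hh.continuous.continuousOn, hh.differentiable one_ne_zero X⟩

lemma ibp_two {A X α : ℝ} (hα1 : α < 1) (hAX : A < X) {h w : ℝ → ℝ}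
    (hh : ContDiff ℝ 1 h) (hw : ContDiff ℝ 1 w) :
    ∫ s in A..X, (X - s) ^ (-α) * deriv (fun s => h s * w s) s
      = h X * (∫ s in A..X, (X - s) ^ (-α) * deriv w s)
        - (X - A) ^ (-α) * (h A - h X) * w A
        + α * ∫ s in A..X, (X - s) ^ (-α) * (dslope h X s * w s) := by
  have hr : -1 < -α := by linarith
  have hL : 0 < X - A := by linarith
  have hw' : Continuous (deriv w) := hw.continuous_deriv le_rfl
  have hhw : ContDiff ℝ 1 (fun s => h s * w s) := hh.mul hw
  have hhw' := hhw.continuous_deriv le_rfl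
  have hq := dslope_cont hh X
  have hqs : ∀ s, (s - X) * dslope h X s = h s - h X := fun s => by
    simpa using sub_smul_dslope h X s
  have i1 := kern_int_mul (A := A) (X := X) hr hhw'
  have i2 := (kern_int_mul (A := A) (X := X) hr hw').const_mul (h X)
  have i3 := (kern_int_mul (A := A) (X := X) hr (F := fun s => dslope h X s * w s) (hq.mul hw.continuous)).const_mul α
  have hsplit : ∀ s, s < X → (X - s) ^ (1 - α) = (X - s) * (X - s) ^ (-α) := fun s hs => by
    rw [sub_eq_add_neg 1, rpow_add (by linarith), rpow_one]
  have key := intervalIntegral.integral_eq_sub_of_hasDerivAt_of_le hAX.le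
    (f := fun s => (X - s) ^ (1 - α) * (-(dslope h X s * w s)))
    (f' := fun s => (X - s) ^ (-α) * deriv (fun s => h s * w s) s
      - h X * ((X - s) ^ (-α) * deriv w s) - α * ((X - s) ^ (-α) * (dslope h X s * w s)))
    ((ContinuousOn.rpow_const (by fun_prop) (fun _ _ => Or.inr (by linarith))).mul
      (hq.mul hw.continuous).neg.continuousOn)
    (by
      intro s hs
      have hp : 0 < X - s := by linarith [hs.2]
      have d1 : HasDerivAt (fun s => X - s) (-1) s := by
        simpa using (hasDerivAt_id s).const_sub X
      have dw := (hw.differentiable one_ne_zero s).hasDerivAt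
      have dhw := (hhw.differentiable one_ne_zero s).hasDerivAt
      have d2 := (d1.rpow_const (p := -α) (Or.inl hp.ne')).mul (dhw.sub (dw.const_mul (h X)))
      have hev : (fun s => (X - s) ^ (1 - α) * (-(dslope h X s * w s))) =ᶠ[nhds s]
          ((fun s => (X - s) ^ (-α)) * ((fun s => h s * w s) - fun s => h X * w s)) := by
        filter_upwards [Iio_mem_nhds hs.2] with y hy
        simp only [Pi.mul_apply, Pi.sub_apply]
        rw [hsplit y hy]
        linear_combination ((X - y) ^ (-α) * w y) * hqs y
      refine (d2.congr_of_eventuallyEq hev).congr_deriv ?_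
      have e1 : (X - s) ^ (-α) = (X - s) * (X - s) ^ (-α - 1) := by
        rw [rpow_sub hp, rpow_one]; field_simp
      simp only [Pi.sub_apply]
      have := hqs s
      linear_combination (-α * dslope h X s * w s) * (-1) * e1
        + (- α * (X - s) ^ (-α - 1) * w s) * this)
    ((i1.sub i2).sub i3)
  rw [intervalIntegral.integral_sub (i1.sub i2) i3, intervalIntegral.integral_sub i1 i2,
    intervalIntegral.integral_const_mul, intervalIntegral.integral_const_mul] at key
  simp only [sub_self] at key
  rw [zero_rpow (by linarith : (1 - α) ≠ 0), hsplit A hAX] at key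
  linear_combination key + (X - A) ^ (-α) * w A * (-1) * hqs A

lemma series_int {A X α : ℝ} (hα0 : 0 < α) (hα1 : α < 1) (hAX : A < X) {h w : ℝ → ℝ}
    (hh : EntireReal h) (hw : Continuous w) :
    HasSum (fun k : ℕ => iteratedDeriv (k + 1) h X / ((k + 1).factorial : ℝ) * (-1) ^ k *
        ∫ s in A..X, (X - s) ^ ((k : ℝ) - α) * w s)
      (∫ s in A..X, (X - s) ^ (-α) * (dslope h X s * w s)) := by
  have hr : -1 < -α := by linarith
  have hL : 0 < X - A := by linarith
  set c : ℕ → ℝ := fun k => iteratedDeriv (k + 1) h X / ((k + 1).factorial : ℝ) with hc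
  have hsum : ∀ y : ℝ, y ≠ 0 → HasSum (fun k => c k * y ^ k) ((h (X + y) - h X) / y) := by
    intro y hy
    have h1 := entire_taylor hh X y
    rw [← hasSum_nat_add_iff' 1] at h1
    simp only [Finset.range_one, Finset.sum_singleton, iteratedDeriv_zero, Nat.factorial_zero,
      Nat.cast_one, div_one, pow_zero, mul_one] at h1
    refine hasSum_of_eq' (h1.div_const y) (fun k => ?_) rfl
    simp only [hc, pow_succ]
    field_simp
  have habs : Summable (fun k => |c k| * (X - A) ^ k) := by
    have := (hsum (X - A) hL.ne').summable.abs
    simpa [abs_mul, abs_pow, abs_of_pos hL] using this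
  obtain ⟨M, hM⟩ : ∃ M, ∀ s ∈ Icc A X, ‖w s‖ ≤ M :=
    isCompact_Icc.exists_bound_of_continuousOn hw.continuousOn
  have hpow : ∀ s ∈ Ioc A X, ∀ k : ℕ, (X - s) ^ ((k : ℝ) - α) = (X - s) ^ k * (X - s) ^ (-α) := by
    intro s hs k
    rcases eq_or_lt_of_le hs.2 with rfl | hlt
    · rw [sub_self, zero_rpow (by linarith : -α ≠ 0), mul_zero]
      rcases k with _ | k
      · simp [hα0.ne']
      · apply zero_rpow
        push_cast
        have : (0 : ℝ) ≤ k := Nat.cast_nonneg k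
        intro h0
        linarith
    · rw [sub_eq_add_neg (k : ℝ), rpow_add (by linarith), rpow_natCast]
  have main := intervalIntegral.hasSum_integral_of_dominated_convergence (μ := volume)
    (a := A) (b := X)
    (F := fun k s => c k * (-1) ^ k * ((X - s) ^ ((k : ℝ) - α) * w s))
    (f := fun s => (X - s) ^ (-α) * (dslope h X s * w s))
    (fun k s => |c k| * (X - A) ^ k * ((X - s) ^ (-α) * M)) ?_ ?_ ?_ ?_ ?_
  · simpa only [intervalIntegral.integral_const_mul] using main
  · intro k
    refine aesm_of ((kern_int_mul (r := (k : ℝ) - α) ?_ hw).const_mul _)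
    have : (0 : ℝ) ≤ k := Nat.cast_nonneg k
    linarith
  · intro k
    refine Filter.Eventually.of_forall fun s hs => ?_
    rw [uIoc_of_le hAX.le] at hs
    have hs0 : 0 ≤ X - s := by linarith [hs.2]
    rw [hpow s hs k, norm_mul, norm_mul, norm_mul, norm_mul, norm_pow, norm_pow]
    simp only [norm_neg, norm_one, one_pow, mul_one]
    rw [norm_of_nonneg hs0, norm_of_nonneg (rpow_nonneg hs0 _), Real.norm_eq_abs, mul_assoc,
      mul_assoc]
    have hwM := hM s ⟨hs.1.le, hs.2⟩
    have := hs.1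
    have := rpow_nonneg hs0 (-α)
    gcongr
  · exact Filter.Eventually.of_forall fun s _ => habs.mul_right _
  · simp only [tsum_mul_right]
    exact (kern_int_mul hr continuous_const).const_mul _
  · refine Filter.Eventually.of_forall fun s hs => ?_
    rw [uIoc_of_le hAX.le] at hs
    rcases eq_or_lt_of_le hs.2 with hEq | hlt
    · have e1 : ∀ k : ℕ, c k * (-1) ^ k * ((X - s) ^ ((k : ℝ) - α) * w s) = 0 := by
        intro k
        rw [hpow s hs k, hEq, sub_self, zero_rpow (by linarith : -α ≠ 0)]
        ring
      simp only [e1]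
      rw [hEq, sub_self, zero_rpow (by linarith : -α ≠ 0), zero_mul]
      exact hasSum_zero
    · have h1 := (hsum (s - X) (by linarith)).mul_right ((X - s) ^ (-α) * w s)
      have e2 : dslope h X s = (h (X + (s - X)) - h X) / (s - X) := by
        rw [dslope_of_ne _ (by linarith : s ≠ X), slope_def_field]
        congr 3
        ring
      have e3 : (X - s) ^ (-α) * (dslope h X s * w s)
          = (h (X + (s - X)) - h X) / (s - X) * ((X - s) ^ (-α) * w s) := by
        rw [e2]; ring
      rw [e3]
      refine hasSum_of_eq' h1 (fun k => ?_) rfl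
      rw [hpow s hs k, show s - X = (-1) * (X - s) by ring, mul_pow]
      ring

/-- Leibniz rule for the Ψ-Caputo derivative expressed in terms of
Ψ-Riemann–Liouville derivatives. -/
theorem leibniz_psi_Caputo_via_RL
    (a b : ℝ) (hab : a < b) (α : ℝ) (hα0 : 0 < α) (hα1 : α < 1)
    (Ψ : ℝ → ℝ)
    (hΨmono : StrictMonoOn Ψ (Set.Icc a b))
    (hΨC1 : ContDiffOn ℝ 1 Ψ (Set.Icc a b))
    (hΨpos : ∀ t ∈ Set.Icc a b, 0 < deriv Ψ t)
    (f g h w : ℝ → ℝ)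
    (hf : f = fun t => h (Ψ t)) (hg : g = fun t => w (Ψ t))
    (hh : EntireReal h) (hw : EntireReal w)
    (x : ℝ) (hx : x ∈ Set.Ioo a b) :
    HasSum
      (fun k : ℕ => genBinom α k * iteratedDeriv k h (Ψ x) * psiRLD a Ψ g (α - k) x)
      (psiCD a Ψ (fun t => f t * g t) α x +
        f a * g a * (Ψ x - Ψ a) ^ (-α) / Real.Gamma (1 - α)) := by
  have hΨd : ∀ t ∈ Icc a b, DifferentiableAt ℝ Ψ t := fun t ht =>
    differentiableAt_of_deriv_ne_zero (hΨpos t ht).ne'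
  have hhC := entire_contDiff hh
  have hwC := entire_contDiff hw
  have cov : ∀ y ∈ Ioo a b, ∀ (r : ℝ) (F : ℝ → ℝ),
      ∫ t in a..y, deriv Ψ t * (Ψ y - Ψ t) ^ r * F (Ψ t)
        = ∫ s in Ψ a..Ψ y, (Ψ y - s) ^ r * F s := by
    intro y hy r F
    have hsub : Icc a y ⊆ Icc a b := Icc_subset_Icc_right hy.2.le
    rw [← psi_cov hy.1.le (hΨmono.mono hsub) (fun t ht => hΨpos t (hsub ht))
      (fun s => (Ψ y - s) ^ r * F s)]
    simp only [mul_assoc]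
  have hxI : x ∈ Icc a b := ⟨hx.1.le, hx.2.le⟩
  have hAX : Ψ a < Ψ x := hΨmono ⟨le_rfl, hab.le⟩ hxI hx.1
  have hG : Real.Gamma (1 - α) ≠ 0 := (Real.Gamma_pos_of_pos (by linarith)).ne'
  have hCD : psiCD a Ψ (fun t => f t * g t) α x = (Real.Gamma (1 - α))⁻¹ *
      ∫ s in Ψ a..Ψ x, (Ψ x - s) ^ (-α) * deriv (fun s => h s * w s) s := by
    unfold psiCD psiI
    rw [if_neg (by linarith), if_neg (by linarith), ← cov x hx]
    congr 1
    refine intervalIntegral.integral_congr fun t ht => ?_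
    rw [uIcc_of_le hx.1.le] at ht
    have htI : t ∈ Icc a b := ⟨ht.1, ht.2.trans hx.2.le⟩
    have hd : deriv (fun t => f t * g t) t = deriv (fun s => h s * w s) (Ψ t) * deriv Ψ t := by
      subst hf hg
      exact (HasDerivAt.comp t ((hhC.mul hwC).differentiable one_ne_zero (Ψ t)).hasDerivAt
        (hΨd t htI).hasDerivAt).deriv
    have hne := (hΨpos t htI).ne'
    have e : (1 - α - 1) = -α := by ring
    simp only [hd, e]
    field_simp
  have h0 : psiRLD a Ψ g (α - (0 : ℕ)) x = (Real.Gamma (1 - α))⁻¹ *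
      ((Ψ x - Ψ a) ^ (-α) * w (Ψ a) + ∫ s in Ψ a..Ψ x, (Ψ x - s) ^ (-α) * deriv w s) := by
    have hev : (fun y => psiI a Ψ g (1 - α) y) =ᶠ[nhds x]
        fun y => (Real.Gamma (1 - α))⁻¹ *
          ((fun Y => ∫ s in Ψ a..Y, (Y - s) ^ (-α) * w s) ∘ Ψ) y := by
      filter_upwards [Ioo_mem_nhds hx.1 hx.2] with y hy
      unfold psiI
      have e : (1 - α - 1) = -α := by ring
      rw [if_neg (by linarith), hg, e, cov y hy]
      rfl
    have hd := ((HasDerivAt.comp x (rl_deriv hα1 hAX hwC) (hΨd x hxI).hasDerivAt).const_mul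
      (Real.Gamma (1 - α))⁻¹).congr_of_eventuallyEq hev
    unfold psiRLD
    rw [Nat.cast_zero, sub_zero, if_neg (by linarith), hd.deriv]
    have hne := (hΨpos x hxI).ne'
    field_simp
  have hk : ∀ k : ℕ, psiRLD a Ψ g (α - ((k + 1 : ℕ) : ℝ)) x =
      (Real.Gamma (((k + 1 : ℕ) : ℝ) - α))⁻¹ *
        ∫ s in Ψ a..Ψ x, (Ψ x - s) ^ ((k : ℝ) - α) * w s := by
    intro k
    have hk0 : (0 : ℝ) ≤ k := Nat.cast_nonneg k
    unfold psiRLD psiI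
    rw [if_pos (by push_cast; linarith), neg_sub, if_neg (by push_cast; linarith), ← cov x hx, hg]
    have e : ((k + 1 : ℕ) : ℝ) - α - 1 = (k : ℝ) - α := by push_cast; ring
    rw [e]
  rw [← hasSum_nat_add_iff' 1]
  simp only [Finset.range_one, Finset.sum_singleton]
  have hs := (series_int hα0 hα1 hAX hh hwC.continuous).mul_left (α * (Real.Gamma (1 - α))⁻¹)
  refine hasSum_of_eq' hs (fun k => ?_) ?_
  · rw [hk k]
    linear_combination (iteratedDeriv (k + 1) h (Ψ x) *
      ∫ s in Ψ a..Ψ x, (Ψ x - s) ^ ((k : ℝ) - α) * w s) * genBinom_gamma α hα1 k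
  · rw [hCD, h0, ibp_two hα1 hAX hhC hwC, hf, hg]
    simp only [genBinom, iteratedDeriv_zero, Finset.range_zero, Finset.prod_empty,
      Nat.factorial_zero, Nat.cast_one, div_one, one_mul]
    field_simp
    ring
end

section
/- (Composition identity reducing mixed orders.) Let 0 < α < 1, 0 < β ≤ 1, set ξ := (1−β)(1−α), and let l, m be natural numbers with l ≤ m. Let a < b, Ψ : ℝ → ℝ strictly increasing and continuously differentiable on [a,b] with Ψ'(t) > 0 for all t ∈ [a,b], and g : ℝ → ℝ continuous on [a,b]. Then for every x ∈ (a,b): (^{RL}D^{α+ξ−l;Ψ}(I^{ξ+m−l;Ψ} g))(x) = (^{RL}D^{α−m;Ψ} g)(x). -/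
open Real

open MeasureTheory Set Filter Topology in
lemma aux_beta (p q : ℝ) (hp : 0 < p) (hq : 0 < q) (v X : ℝ) (hv : v < X) :
    ∫ u in v..X, (X - u) ^ (p - 1) * (u - v) ^ (q - 1) =
      (X - v) ^ (p + q - 1) * (Real.Gamma p * Real.Gamma q / Real.Gamma (p + q)) := by
  have ha : 0 < X - v := sub_pos.2 hv
  have h1 := Complex.betaIntegral_scaled (q : ℂ) (p : ℂ) ha
  have h2 : ∫ x in (0:ℝ)..(X - v), (x : ℂ) ^ ((q : ℂ) - 1) * (((X - v : ℝ) : ℂ) - x) ^ ((p : ℂ) - 1)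
      = ((∫ x in (0:ℝ)..(X - v), x ^ (q - 1) * (X - v - x) ^ (p - 1) : ℝ) : ℂ) := by
    rw [← intervalIntegral.integral_ofReal]
    apply intervalIntegral.integral_congr
    intro x hx
    rw [uIcc_of_le ha.le] at hx
    have e1 : ((x ^ (q - 1) : ℝ) : ℂ) = (x : ℂ) ^ ((q : ℂ) - 1) := by
      rw [Complex.ofReal_cpow hx.1]; push_cast; rfl
    have e2 : (((X - v - x) ^ (p - 1) : ℝ) : ℂ) = (((X - v : ℝ) : ℂ) - x) ^ ((p : ℂ) - 1) := by
      rw [Complex.ofReal_cpow (by linarith [hx.2])]; push_cast; rfl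
    simp only [Complex.ofReal_mul, e1, e2]
  have h3 : Complex.betaIntegral q p = ((Real.Gamma p * Real.Gamma q / Real.Gamma (p + q) : ℝ) : ℂ) := by
    rw [Complex.betaIntegral_eq_Gamma_mul_div _ _ (by simpa) (by simpa)]
    rw [← Complex.ofReal_add, Complex.Gamma_ofReal, Complex.Gamma_ofReal, Complex.Gamma_ofReal,
      add_comm q p]
    push_cast; ring
  have h4 : ((X - v : ℝ) : ℂ) ^ ((q : ℂ) + p - 1) = (((X - v) ^ (p + q - 1) : ℝ) : ℂ) := by
    rw [Complex.ofReal_cpow ha.le]; push_cast; rw [add_comm (q : ℂ) p]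
  rw [h2, h3, h4, ← Complex.ofReal_mul] at h1
  have h5 := Complex.ofReal_injective h1
  rw [← h5]
  have h6 := intervalIntegral.integral_comp_sub_right
    (fun x => x ^ (q - 1) * (X - v - x) ^ (p - 1)) v (a := v) (b := X)
  rw [sub_self] at h6
  rw [← h6]
  apply intervalIntegral.integral_congr
  intro u _
  simp only
  rw [mul_comm, show X - v - (u - v) = X - u by ring]

open MeasureTheory Set Filter Topology in
lemma aux_semigroup_raw (p q : ℝ) (hp : 0 < p) (hq : 0 < q) (A X : ℝ) (hX : A ≤ X)
    (G : BoundedContinuousFunction ℝ ℝ) :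
    ∫ u in A..X, (X - u) ^ (p - 1) * ∫ v in A..u, (u - v) ^ (q - 1) * G v =
      (Real.Gamma p * Real.Gamma q / Real.Gamma (p + q)) *
        ∫ v in A..X, (X - v) ^ (p + q - 1) * G v := by
  set C := Real.Gamma p * Real.Gamma q / Real.Gamma (p + q) with hC
  have hCpos : 0 < C := div_pos (mul_pos (Real.Gamma_pos_of_pos hp) (Real.Gamma_pos_of_pos hq))
    (Real.Gamma_pos_of_pos (by linarith))
  set μ : Measure ℝ := volume.restrict (Ioc A X) with hμ
  -- the kernel
  set K : ℝ → ℝ → ℝ := fun u v => if v < u then (X - u) ^ (p - 1) * (u - v) ^ (q - 1) else 0 with hK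
  have hKm : Measurable (Function.uncurry K) := by
    refine Measurable.ite (measurableSet_lt measurable_snd measurable_fst) ?_ measurable_const
    fun_prop
  have hindic : ∀ v, (fun u => K u v) =
      (Ioi v).indicator (fun u => (X - u) ^ (p - 1) * (u - v) ^ (q - 1)) := by
    intro v; ext u
    simp [hK, indicator]
  have hset : ∀ v ∈ Ioo A X, Ioi v ∩ Ioc A X = Ioc v X := by
    intro v hv; ext u; simp only [mem_inter_iff, mem_Ioi, mem_Ioc]
    constructor
    · rintro ⟨h1, h2, h3⟩; exact ⟨h1, h3⟩
    · rintro ⟨h1, h2⟩; exact ⟨h1, hv.1.trans h1, h2⟩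
  have hKval : ∀ v ∈ Ioo A X, ∫ u, K u v ∂μ = (X - v) ^ (p + q - 1) * C := by
    intro v hv
    rw [hindic v, integral_indicator measurableSet_Ioi, hμ, Measure.restrict_restrict measurableSet_Ioi,
      hset v hv, ← intervalIntegral.integral_of_le hv.2.le, aux_beta p q hp hq v X hv.2]
  have hKint : ∀ v ∈ Ioo A X, Integrable (fun u => K u v) μ := by
    intro v hv
    by_contra hcon
    have h1 := hKval v hv
    rw [integral_undef hcon] at h1
    have : 0 < (X - v) ^ (p + q - 1) := Real.rpow_pos_of_pos (sub_pos.2 hv.2) _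
    have := mul_pos this hCpos
    linarith
  have hae : ∀ᵐ v ∂μ, v ∈ Ioo A X := by
    rw [hμ, ← restrict_Ioo_eq_restrict_Ioc]
    exact ae_restrict_mem measurableSet_Ioo
  have hae' : ∀ᵐ v ∂μ, v ∈ Ioc A X := ae_restrict_mem measurableSet_Ioc
  have hpow : Integrable (fun v => (X - v) ^ (p + q - 1)) μ := by
    have h1 : IntervalIntegrable (fun v : ℝ => v ^ (p + q - 1)) volume 0 (X - A) :=
      intervalIntegral.intervalIntegrable_rpow' (by linarith)
    have h2 := (h1.comp_sub_left X).symm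
    simp only [sub_sub_cancel, sub_zero] at h2
    rwa [intervalIntegrable_iff_integrableOn_Ioc_of_le hX] at h2
  have hKI : Integrable (Function.uncurry K) (μ.prod μ) := by
    rw [integrable_prod_iff' hKm.aestronglyMeasurable]
    refine ⟨?_, ?_⟩
    · filter_upwards [hae] with v hv using hKint v hv
    · refine (hpow.mul_const C).congr ?_
      filter_upwards [hae] with v hv
      rw [← hKval v hv]
      apply integral_congr_ae
      filter_upwards [hae'] with u hu
      have : 0 ≤ K u v := by
        simp only [hK]
        split_ifs with h
        · exact mul_nonneg (Real.rpow_nonneg (by linarith [hu.2]) _) (Real.rpow_nonneg (by linarith) _)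
        · exact le_rfl
      simp only [Function.uncurry, Real.norm_eq_abs, abs_of_nonneg this]
  have hKG : Integrable (Function.uncurry fun u v => K u v * G v) (μ.prod μ) := by
    refine hKI.mul_bdd (c := ‖G‖) (g := fun z : ℝ × ℝ => G z.2) ?_ ?_
    · exact (G.continuous.comp continuous_snd).aestronglyMeasurable
    · exact Eventually.of_forall fun z => G.norm_coe_le_norm z.2
  have hswap := integral_integral_swap hKG
  rw [intervalIntegral.integral_of_le hX, intervalIntegral.integral_of_le hX]
  calc _ = ∫ u, ∫ v, K u v * G v ∂μ ∂μ := by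
        apply integral_congr_ae
        filter_upwards [hae'] with u hu
        have e : (fun v => K u v * G v) =
            (Iio u).indicator (fun v => (X - u) ^ (p - 1) * ((u - v) ^ (q - 1) * G v)) := by
          ext v
          by_cases h : v < u
          · simp [hK, indicator, h, mul_assoc]
          · simp [hK, indicator, h]
        have e2 : Iio u ∩ Ioc A X = Ioo A u := by
          ext v; simp only [mem_inter_iff, mem_Iio, mem_Ioc, mem_Ioo]
          constructor
          · rintro ⟨h1, h2, h3⟩; exact ⟨h2, h1⟩
          · rintro ⟨h1, h2⟩; exact ⟨h2, h1, h2.le.trans hu.2⟩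
        rw [e, integral_indicator measurableSet_Iio, hμ, Measure.restrict_restrict measurableSet_Iio,
          e2, intervalIntegral.integral_of_le hu.1.le, integral_Ioc_eq_integral_Ioo,
          integral_const_mul]
    _ = ∫ v, ∫ u, K u v * G v ∂μ ∂μ := hswap
    _ = ∫ v, C * ((X - v) ^ (p + q - 1) * G v) ∂μ := by
        apply integral_congr_ae
        filter_upwards [hae] with v hv
        rw [integral_mul_const, hKval v hv]; ring
    _ = _ := by rw [integral_const_mul]

lemma aux_semigroup (p q : ℝ) (hp : 0 < p) (hq : 0 < q) (A X : ℝ) (hX : A ≤ X)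
    (G : BoundedContinuousFunction ℝ ℝ) :
    rlI A p (rlI A q G) X = rlI A (p + q) G X := by
  have h := aux_semigroup_raw p q hp hq A X hX G
  have hp' := (Real.Gamma_pos_of_pos hp).ne'
  have hq' := (Real.Gamma_pos_of_pos hq).ne'
  have hpq' := (Real.Gamma_pos_of_pos (by linarith : 0 < p + q)).ne'
  simp only [rlI, hp.ne', hq.ne', (by linarith : 0 < p + q).ne', if_false]
  have e : ∀ u, (X - u) ^ (p - 1) * ((Real.Gamma q)⁻¹ * ∫ v in A..u, (u - v) ^ (q - 1) * G v) =
      (Real.Gamma q)⁻¹ * ((X - u) ^ (p - 1) * ∫ v in A..u, (u - v) ^ (q - 1) * G v) := by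
    intro u; ring
  simp only [e]
  rw [intervalIntegral.integral_const_mul, h]
  field_simp

open MeasureTheory Set Filter Topology in
lemma aux_cont (q : ℝ) (hq : 0 < q) (A : ℝ) (G : BoundedContinuousFunction ℝ ℝ) :
    ∃ φ : ℝ → ℝ, Continuous φ ∧ ∀ X, A < X → rlI A q G X = φ X := by
  refine ⟨fun X => (Real.Gamma q)⁻¹ * ((X - A) ^ q *
    ∫ s in (0:ℝ)..1, s ^ (q - 1) * G (X - (X - A) * s)), ?_, ?_⟩
  · refine continuous_const.mul (Continuous.mul ?_ ?_)
    · exact (continuous_id.sub continuous_const).rpow_const (fun _ => Or.inr hq.le)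
    · have hb : IntervalIntegrable (fun s : ℝ => s ^ (q - 1)) volume 0 1 :=
        intervalIntegral.intervalIntegrable_rpow' (by linarith)
      refine intervalIntegral.continuous_of_dominated_interval
        (bound := fun s => s ^ (q - 1) * ‖G‖) ?_ ?_ (hb.mul_const _) ?_
      · intro X
        refine Measurable.aestronglyMeasurable ?_
        refine Measurable.mul (by fun_prop) ?_
        exact (G.continuous.comp (by fun_prop)).measurable
      · intro X
        refine Eventually.of_forall fun s hs => ?_
        rw [uIoc_of_le zero_le_one] at hs
        have h0 : (0:ℝ) ≤ s ^ (q - 1) := Real.rpow_nonneg hs.1.le _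
        rw [norm_mul, Real.norm_of_nonneg h0]
        exact mul_le_mul_of_nonneg_left (G.norm_coe_le_norm _) h0
      · refine Eventually.of_forall fun s _ => ?_
        exact continuous_const.mul (G.continuous.comp (by fun_prop))
  · intro X hX
    have hpos : 0 < X - A := sub_pos.2 hX
    simp only [rlI, hq.ne', if_false]
    congr 1
    have h := intervalIntegral.integral_comp_sub_mul (a := 0) (b := 1)
      (fun t => (X - t) ^ (q - 1) * G t) hpos.ne' X
    simp only [mul_one, mul_zero, sub_zero, sub_sub_cancel, smul_eq_mul] at h
    have h2 : ∫ s in (0:ℝ)..1, ((X - A) * s) ^ (q - 1) * G (X - (X - A) * s) =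
        (X - A) ^ (q - 1) * ∫ s in (0:ℝ)..1, s ^ (q - 1) * G (X - (X - A) * s) := by
      rw [← intervalIntegral.integral_const_mul]
      apply intervalIntegral.integral_congr
      intro s hs
      rw [uIcc_of_le zero_le_one] at hs
      simp only
      rw [Real.mul_rpow hpos.le hs.1, mul_assoc]
    rw [h2] at h
    have h3 : (X - A) ^ q = (X - A) * (X - A) ^ (q - 1) := by
      rw [← Real.rpow_one_add' hpos.le (by linarith)]; congr 1; ring
    rw [h3, mul_assoc, h]
    field_simp

open MeasureTheory Set Filter Topology in
lemma aux_deriv (q : ℝ) (hq : 0 < q) (A X : ℝ) (hX : A < X) (G : BoundedContinuousFunction ℝ ℝ) :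
    HasDerivAt (rlI A (1 + q) G) (rlI A q G X) X := by
  obtain ⟨φ, hφ, hφe⟩ := aux_cont q hq A G
  have h : ∀ Y, A < Y → rlI A (1 + q) G Y = ∫ u in A..Y, φ u := by
    intro Y hY
    rw [← aux_semigroup 1 q one_pos hq A Y hY.le G]
    rw [rlI, if_neg one_ne_zero]
    simp only [Real.Gamma_one, inv_one, one_mul, sub_self, Real.rpow_zero]
    rw [intervalIntegral.integral_of_le hY.le, intervalIntegral.integral_of_le hY.le]
    exact setIntegral_congr_fun measurableSet_Ioc fun u hu => hφe u hu.1
  rw [hφe X hX]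
  refine (intervalIntegral.integral_hasDerivAt_right (hφ.intervalIntegrable A X)
    (hφ.stronglyMeasurableAtFilter _ _) hφ.continuousAt).congr_of_eventuallyEq ?_
  filter_upwards [lt_mem_nhds hX] with Y hY using h Y hY

open MeasureTheory Set Filter Topology in
lemma aux_subst (a b : ℝ) (Ψ : ℝ → ℝ)
    (hΨmono : StrictMonoOn Ψ (Set.Icc a b))
    (hΨpos : ∀ t ∈ Set.Icc a b, 0 < deriv Ψ t)
    (f φ : ℝ → ℝ) (hf : ∀ t ∈ Ioc a b, f t = φ (Ψ t)) (p : ℝ) (x : ℝ) (hx : x ∈ Ioc a b) :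
    psiI a Ψ f p x = rlI (Ψ a) p φ (Ψ x) := by
  unfold psiI rlI
  split_ifs with h
  · exact hf x hx
  congr 1
  have hsub : Icc a x ⊆ Icc a b := Icc_subset_Icc_right hx.2
  have hsub' : Ioc a x ⊆ Icc a b := Ioc_subset_Icc_self.trans hsub
  have hdiff : ∀ t ∈ Icc a b, HasDerivAt Ψ (deriv Ψ t) t := fun t ht =>
    (differentiableAt_of_deriv_ne_zero (hΨpos t ht).ne').hasDerivAt
  have hcont : ContinuousOn Ψ (Icc a x) := fun t ht =>
    (hdiff t (hsub ht)).continuousAt.continuousWithinAt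
  have ha : a ∈ Icc a b := ⟨le_rfl, hx.1.le.trans hx.2⟩
  have hxx : x ∈ Icc a b := ⟨hx.1.le, hx.2⟩
  have hlt : Ψ a < Ψ x := hΨmono ha hxx hx.1
  have himg : Ψ '' Ioc a x = Ioc (Ψ a) (Ψ x) := by
    apply Subset.antisymm
    · rintro _ ⟨t, ht, rfl⟩
      exact ⟨hΨmono ha (hsub' ht) ht.1, hΨmono.monotoneOn (hsub' ht) hxx ht.2⟩
    · exact intermediate_value_Ioc hx.1.le hcont
  rw [intervalIntegral.integral_of_le hx.1.le, intervalIntegral.integral_of_le hlt.le, ← himg,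
    integral_image_eq_integral_abs_deriv_smul measurableSet_Ioc
      (fun t ht => (hdiff t (hsub' ht)).hasDerivWithinAt) (hΨmono.injOn.mono hsub')]
  refine setIntegral_congr_fun measurableSet_Ioc fun t ht => ?_
  simp only [smul_eq_mul]
  rw [abs_of_pos (hΨpos t (hsub' ht)), hf t ⟨ht.1, ht.2.trans hx.2⟩, mul_assoc]

open MeasureTheory Set Filter Topology in
lemma aux_ext (a b : ℝ) (Ψ : ℝ → ℝ)
    (hΨmono : StrictMonoOn Ψ (Set.Icc a b)) (hΨc : ContinuousOn Ψ (Icc a b))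
    (g : ℝ → ℝ) (hg : ContinuousOn g (Set.Icc a b)) :
    ∃ G : BoundedContinuousFunction ℝ ℝ, ∀ t ∈ Icc a b, g t = G (Ψ t) := by
  have he : IsClosedEmbedding (fun t : Icc a b => Ψ t) :=
    Continuous.isClosedEmbedding (continuousOn_iff_continuous_domRestrict.1 hΨc)
      (fun s t hst => Subtype.ext (hΨmono.injOn s.2 t.2 hst))
  obtain ⟨G, -, hG⟩ := BoundedContinuousFunction.exists_extension_norm_eq_of_isClosedEmbedding
    (BoundedContinuousFunction.mkOfCompact
      ⟨fun t : Icc a b => g t, continuousOn_iff_continuous_domRestrict.1 hg⟩) he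
  exact ⟨G, fun t ht => (congrFun hG ⟨t, ht⟩).symm⟩

/-- composition identity reducing mixed orders, with `ξ = (1-β)(1-α)`:
`^{RL}D^{α+ξ-l;Ψ} ∘ I^{ξ+m-l;Ψ} = ^{RL}D^{α-m;Ψ}` for naturals `l ≤ m`. -/
theorem psiRLD_psiI_composition
    (a b : ℝ) (hab : a < b) (α β : ℝ)
    (hα0 : 0 < α) (hα1 : α < 1) (hβ0 : 0 < β) (hβ1 : β ≤ 1)
    (l m : ℕ) (hlm : l ≤ m)
    (Ψ : ℝ → ℝ)
    (hΨmono : StrictMonoOn Ψ (Set.Icc a b))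
    (hΨC1 : ContDiffOn ℝ 1 Ψ (Set.Icc a b))
    (hΨpos : ∀ t ∈ Set.Icc a b, 0 < deriv Ψ t)
    (g : ℝ → ℝ) (hg : ContinuousOn g (Set.Icc a b))
    (x : ℝ) (hx : x ∈ Set.Ioo a b) :
    psiRLD a Ψ (fun y => psiI a Ψ g ((1 - β) * (1 - α) + m - l) y)
        (α + (1 - β) * (1 - α) - l) x =
      psiRLD a Ψ g (α - m) x := by

  have hΨc : ContinuousOn Ψ (Set.Icc a b) := hΨC1.continuousOn
  obtain ⟨G, hG⟩ := aux_ext a b Ψ hΨmono hΨc g hg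
  have hsg : ∀ p q : ℝ, 0 < p → 0 ≤ q → ∀ y ∈ Set.Ioc a b,
      psiI a Ψ (fun y => psiI a Ψ g q y) p y = rlI (Ψ a) (p + q) G (Ψ y) := by
    intro p q hp hq y hy
    have h1 := fun t (ht : t ∈ Set.Ioc a b) => aux_subst a b Ψ hΨmono hΨpos g G
      (fun t ht => hG t (Set.Ioc_subset_Icc_self ht)) q t ht
    rw [aux_subst a b Ψ hΨmono hΨpos _ (rlI (Ψ a) q G) h1 p y hy]
    rcases hq.eq_or_lt with h0 | h0
    · subst h0
      have : rlI (Ψ a) 0 G = G := by ext u; simp [rlI]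
      rw [this, add_zero]
    · exact aux_semigroup p q hp h0 _ _
        (hΨmono.monotoneOn ⟨le_rfl, hab.le⟩ (Set.Ioc_subset_Icc_self hy) hy.1.le) G
  have hone : ∀ q : ℝ, ∀ y ∈ Set.Ioc a b, psiI a Ψ g q y = rlI (Ψ a) q G (Ψ y) :=
    fun q y hy => aux_subst a b Ψ hΨmono hΨpos g G
      (fun t ht => hG t (Set.Ioc_subset_Icc_self ht)) q y hy
  have hxI : x ∈ Set.Ioc a b := ⟨hx.1, hx.2.le⟩
  have hξ0 : 0 ≤ (1 - β) * (1 - α) := mul_nonneg (by linarith) (by linarith)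
  have hβα : 0 < β * (1 - α) := mul_pos hβ0 (by linarith)
  have hexp : α + (1 - β) * (1 - α) = 1 - β * (1 - α) := by ring
  have hlm' : (l : ℝ) ≤ m := by exact_mod_cast hlm
  have hq : 0 ≤ (1 - β) * (1 - α) + m - l := by linarith
  have hnear : ∀ᶠ y in nhds x, y ∈ Set.Ioc a b := by
    filter_upwards [Ioo_mem_nhds hx.1 hx.2] with y hy using ⟨hy.1, hy.2.le⟩
  rcases Nat.eq_zero_or_pos l with hl | hl
  · subst hl
    have hp : 0 < 1 - (α + (1 - β) * (1 - α) - ((0 : ℕ) : ℝ)) := by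
      rw [hexp]; push_cast; linarith
    have hev : (fun y => psiI a Ψ (fun y => psiI a Ψ g ((1 - β) * (1 - α) + m - ((0 : ℕ) : ℝ)) y)
        (1 - (α + (1 - β) * (1 - α) - ((0 : ℕ) : ℝ))) y) =ᶠ[nhds x]
        fun y => rlI (Ψ a) (1 + (m - α)) G (Ψ y) := by
      filter_upwards [hnear] with y hy
      rw [hsg _ _ hp hq y hy]
      congr 1; push_cast; ring
    unfold psiRLD
    rw [if_neg (by push_cast; linarith), hev.deriv_eq]
    rcases Nat.eq_zero_or_pos m with hm | hm
    · subst hm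
      rw [if_neg (by push_cast; linarith)]
      congr 1
      apply Filter.EventuallyEq.deriv_eq
      filter_upwards [hnear] with y hy
      rw [hone _ y hy]
      congr 1; push_cast; ring
    · have hm1 : (1 : ℝ) ≤ m := by exact_mod_cast hm
      rw [if_pos (by linarith), hone _ x hxI]
      have hΨx := hΨpos x (Set.Ioo_subset_Icc_self hx)
      have hd := (differentiableAt_of_deriv_ne_zero hΨx.ne').hasDerivAt
      have hlt : Ψ a < Ψ x := hΨmono ⟨le_rfl, hab.le⟩ (Set.Ioo_subset_Icc_self hx) hx.1
      have hD := (aux_deriv (m - α) (by linarith) (Ψ a) (Ψ x) hlt G).comp x hd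
      have hD' := hD.deriv
      simp only [Function.comp_def] at hD'
      rw [hD', neg_sub]
      field_simp
  · have hl1 : (1 : ℝ) ≤ l := by exact_mod_cast hl
    unfold psiRLD
    rw [if_pos (by linarith), if_pos (by linarith), hsg _ _ (by linarith) hq x hxI, hone _ x hxI]
    congr 1; ring
end
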